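/- (Systematic RKRP codes are MDS with probability 1.) Let m, n, S ≥ 1, set K = mn and N = K + S. For (P, Q) ∈ ℝ^{S×m} × ℝ^{S×n}, let F = P ⊙ Q be the S×K row-wise Khatri-Rao product and let G be the N×K matrix obtained by stacking the K×K identity matrix I_K on top of F. Then for Lebesgue-almost every pair (P, Q), for every subset R ⊆ [N] of row indices with |R| = K, the K×K submatrix of G consisting of the rows in R is invertible; i.e., G is almost surely the generator matrix of a maximum distance separable code. -/

import Mathlib

open MeasureTheory

/-- The row-wise Khatri-Rao product of `P : ℝ^{S×m}` and `Q : ℝ^{S×n}`. -/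
def rowKhatriRao {S m n : Type*} (P : Matrix S m ℝ) (Q : Matrix S n ℝ) :
    Matrix S (m × n) ℝ :=
  fun i jl => P i jl.1 * Q i jl.2

/-- The systematic RKRP generator matrix: the `K × K` identity (rows indexed
by `Fin m × Fin n`, `K = mn`) stacked on top of `F = P ⊙ Q`, giving an
`N × K` matrix with `N = K + S` rows. -/
def systematicRKRP {S : Type*} {m n : ℕ}
    (P : Matrix S (Fin m) ℝ) (Q : Matrix S (Fin n) ℝ) :
    Matrix ((Fin m × Fin n) ⊕ S) (Fin m × Fin n) ℝ :=
  Matrix.fromRows (1 : Matrix (Fin m × Fin n) (Fin m × Fin n) ℝ)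
    (rowKhatriRao P Q)

/-!
Fix the selected rows. The determinant of the selected submatrix is a polynomial in the entries of
`P` and `Q`, hence analytic, so its zero set is null as soon as it is nonzero at one point: on every
line through that point it vanishes only on a discrete set. To find such a point, match the selected
rows bijectively with the columns, each selected identity row with its own column. A row of `P ⊙ Q`
is the standard basis vector `e_(j,l)` when the corresponding rows of `P` and `Q` are `e_j` and
`e_l`, so `P` and `Q` can be chosen to make the submatrix a permutation matrix.
-/

section Analytic

variable {𝕜 : Type*} [NontriviallyNormedField 𝕜] {E : Type*} [NormedAddCommGroup E]
  {F : Type*} [NormedAddCommGroup F]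

theorem ae_ne_zero_of_analyticOnNhd_one_dim [ConnectedSpace 𝕜] [SecondCountableTopology 𝕜]
    [MeasurableSpace 𝕜] {μ : Measure 𝕜} [NullSingletonClass μ] [NormedSpace 𝕜 F] {f : 𝕜 → F}
    (hf : AnalyticOnNhd 𝕜 f Set.univ) {x₀ : 𝕜} (hx₀ : f x₀ ≠ 0) : ∀ᵐ x ∂μ, f x ≠ 0 := by
  have hae : ae μ ≤ Filter.codiscrete 𝕜 := by
    simpa only [Measure.restrict_univ] using!
      ae_restrict_le_codiscreteWithin (μ := μ) MeasurableSet.univ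
  exact hae (hf.preimage_zero_mem_codiscrete hx₀)

section AddHaar

variable [NormedSpace ℝ E] [FiniteDimensional ℝ E] [MeasurableSpace E] [BorelSpace E]
  {μ : Measure E} [μ.IsAddHaarMeasure]

/-- By Fubini, some `t ≠ 0` works for almost every `v`, and `v ↦ x₀ + t • v` preserves null sets. -/
theorem ae_mem_of_forall_ae_add_smul_mem {s : Set E} (hs : MeasurableSet s) (x₀ : E)
    (h : ∀ v : E, ∀ᵐ t : ℝ, x₀ + t • v ∈ s) : ∀ᵐ x ∂μ, x ∈ s := by
  have hmeas : MeasurableSet {p : E × ℝ | x₀ + p.2 • p.1 ∈ s} :=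
    (by fun_prop : Measurable fun p : E × ℝ => x₀ + p.2 • p.1) hs
  have hslice : ∀ᵐ t : ℝ, ∀ᵐ v ∂μ, x₀ + t • v ∈ s :=
    (Measure.ae_ae_comm hmeas).mp (.of_forall h)
  obtain ⟨t, ht, ht0⟩ : ∃ t : ℝ, (∀ᵐ v ∂μ, x₀ + t • v ∈ s) ∧ t ≠ 0 :=
    (hslice.and (Measure.ae_ne volume (0 : ℝ))).exists
  have hinv : Measure.QuasiMeasurePreserving (fun x => t⁻¹ • (-x₀ + x)) μ μ :=
    (Measure.quasiMeasurePreserving_smul μ (inv_ne_zero ht0)).comp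
      (measurePreserving_add_left μ (-x₀)).quasiMeasurePreserving
  filter_upwards [hinv.ae ht] with x hx
  simpa only [smul_inv_smul₀ ht0, add_neg_cancel_left] using hx

theorem ae_ne_zero_of_analyticOnNhd [NormedSpace ℝ F] {f : E → F}
    (hf : AnalyticOnNhd ℝ f Set.univ) {x₀ : E} (hx₀ : f x₀ ≠ 0) : ∀ᵐ x ∂μ, f x ≠ 0 := by
  have hcont : Continuous f := continuousOn_univ.mp hf.continuousOn
  refine ae_mem_of_forall_ae_add_smul_mem (isOpen_ne_fun hcont continuous_const).measurableSet x₀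
    fun v => ?_
  have hline : AnalyticOnNhd ℝ (fun t : ℝ => f (x₀ + t • v)) Set.univ := fun t _ =>
    (hf _ trivial).fun_comp (by fun_prop : AnalyticAt ℝ (fun t : ℝ => x₀ + t • v) t)
  exact ae_ne_zero_of_analyticOnNhd_one_dim hline (x₀ := 0) (by simpa using hx₀)

end AddHaar

theorem analyticAt_apply_apply [NormedSpace 𝕜 E] [NormedSpace 𝕜 F] {κ ι : Type*} [Fintype κ]
    [Fintype ι] {A : E → κ → ι → F} {x : E} (hA : AnalyticAt 𝕜 A x) (k : κ) (i : ι) :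
    AnalyticAt 𝕜 (fun y => A y k i) x :=
  analyticAt_pi_iff.mp (analyticAt_pi_iff.mp hA k) i

theorem analyticAt_matrix_det [NormedSpace 𝕜 E] {R : Type*} [NormedCommRing R] [NormedAlgebra 𝕜 R]
    {ι : Type*} [Fintype ι] [DecidableEq ι] {A : E → Matrix ι ι R} {x : E}
    (hA : ∀ i j, AnalyticAt 𝕜 (fun y => A y i j) x) : AnalyticAt 𝕜 (fun y => (A y).det) x := by
  simp only [Matrix.det_apply']
  exact Finset.analyticAt_fun_sum _ fun σ _ => analyticAt_const.mul <|
    Finset.analyticAt_fun_prod _ fun i _ => hA (σ i) i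

end Analytic

theorem exists_equiv_apply_eq_of_eq_inl {ι α β : Type*} [Finite α] (c : ι ≃ α)
    {r : ι → α ⊕ β} (hr : Function.Injective r) :
    ∃ e : ι ≃ α, ∀ i a, r i = .inl a → e i = a := by
  have := Fintype.ofFinite α
  have := Fintype.ofEquiv α c.symm
  let f : ι → α := fun i => Sum.elim id (fun _ => c i) (r i)
  have hf {i : ι} {a : α} (h : r i = .inl a) : f i = a := by simp only [f, h, Sum.elim_inl, id]
  have hinj : Set.InjOn f {i | ∃ a, r i = .inl a} := by
    rintro i ⟨a, hi⟩ j ⟨b, hj⟩ hij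
    rw [hf hi, hf hj] at hij
    exact hr (hi.trans (hij ▸ hj.symm))
  obtain ⟨g, hg⟩ := Set.MapsTo.exists_equiv_extend_of_card_eq (t := Finset.univ)
    (Fintype.card_congr c) (fun i _ => Finset.mem_coe.mpr (Finset.mem_univ (f i))) hinj
  exact ⟨g.trans (Equiv.subtypeUnivEquiv Finset.mem_univ), fun i a h => (hg i ⟨a, h⟩).trans (hf h)⟩

theorem rowKhatriRao_apply_eq_single {S m n : Type*} [DecidableEq m] [DecidableEq n]
    {P : Matrix S m ℝ} {Q : Matrix S n ℝ} {s : S} {jl : m × n}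
    (hP : P s = Pi.single jl.1 1) (hQ : Q s = Pi.single jl.2 1) :
    rowKhatriRao P Q s = Pi.single jl 1 := by
  ext kp
  simp only [rowKhatriRao, hP, hQ, Pi.single_apply, Prod.ext_iff, ite_and, mul_ite, mul_one,
    mul_zero]
  split_ifs <;> rfl

section SystematicRKRP

variable {S ι : Type*} {m n : ℕ}

theorem exists_systematicRKRP_submatrix_eq_one_submatrix {r : ι → (Fin m × Fin n) ⊕ S}
    (hr : Function.Injective r) {e : ι → Fin m × Fin n} (he : ∀ i a, r i = .inl a → e i = a) :
    ∃ (P : Matrix S (Fin m) ℝ) (Q : Matrix S (Fin n) ℝ),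
      (systematicRKRP P Q).submatrix r id = Matrix.submatrix 1 e id := by
  let P : Matrix S (Fin m) ℝ :=
    fun s => Function.extend r (fun i => Pi.single (e i).1 1) 0 (.inr s)
  let Q : Matrix S (Fin n) ℝ :=
    fun s => Function.extend r (fun i => Pi.single (e i).2 1) 0 (.inr s)
  refine ⟨P, Q, funext fun i => ?_⟩
  rcases hi : r i with a | s
  · rw [← he i a hi] at hi
    ext jl
    simp only [systematicRKRP, Matrix.submatrix_apply, hi, Matrix.fromRows_apply_inl]
  · have hP : P s = Pi.single (e i).1 1 := by simp only [P, ← hi, hr.extend_apply]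
    have hQ : Q s = Pi.single (e i).2 1 := by simp only [Q, ← hi, hr.extend_apply]
    ext jl
    simp only [systematicRKRP, Matrix.submatrix_apply, hi, Matrix.fromRows_apply_inr,
      rowKhatriRao_apply_eq_single hP hQ, Matrix.one_eq_pi_single]

theorem exists_isUnit_systematicRKRP_submatrix [Fintype ι] [DecidableEq ι]
    (c : ι ≃ Fin m × Fin n) {r : ι → (Fin m × Fin n) ⊕ S} (hr : Function.Injective r) :
    ∃ (P : Matrix S (Fin m) ℝ) (Q : Matrix S (Fin n) ℝ),
      IsUnit ((systematicRKRP P Q).submatrix r c) := by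
  obtain ⟨e, he⟩ := exists_equiv_apply_eq_of_eq_inl c hr
  obtain ⟨P, Q, hPQ⟩ := exists_systematicRKRP_submatrix_eq_one_submatrix hr he
  have hperm : (systematicRKRP P Q).submatrix r c = Matrix.submatrix 1 e c :=
    congrArg (fun A => A.submatrix id c) hPQ
  exact ⟨P, Q, hperm ▸ (Matrix.isUnit_submatrix_equiv e c).mpr isUnit_one⟩

variable [Fintype S]

theorem analyticAt_systematicRKRP_apply (i : (Fin m × Fin n) ⊕ S) (jl : Fin m × Fin n)
    (pq : (S → Fin m → ℝ) × (S → Fin n → ℝ)) :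
    AnalyticAt ℝ (fun pq : (S → Fin m → ℝ) × (S → Fin n → ℝ) =>
      systematicRKRP (Matrix.of pq.1) (Matrix.of pq.2) i jl) pq := by
  rcases i with a | s
  · exact analyticAt_const
  · have hP : AnalyticAt ℝ (fun pq : (S → Fin m → ℝ) × (S → Fin n → ℝ) => pq.1 s jl.1) pq :=
      analyticAt_apply_apply analyticAt_fst s jl.1
    have hQ : AnalyticAt ℝ (fun pq : (S → Fin m → ℝ) × (S → Fin n → ℝ) => pq.2 s jl.2) pq :=
      analyticAt_apply_apply analyticAt_snd s jl.2
    exact hP.mul hQ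

theorem ae_isUnit_systematicRKRP_submatrix [Fintype ι] [DecidableEq ι]
    (c : ι ≃ Fin m × Fin n) {r : ι → (Fin m × Fin n) ⊕ S} (hr : Function.Injective r) :
    ∀ᵐ pq : (S → Fin m → ℝ) × (S → Fin n → ℝ),
      IsUnit ((systematicRKRP (Matrix.of pq.1) (Matrix.of pq.2)).submatrix r c) := by
  have hpi (k : ℕ) : (volume : Measure (S → Fin k → ℝ)).IsAddHaarMeasure :=
    Measure.pi.isAddHaarMeasure _
  have : (volume : Measure ((S → Fin m → ℝ) × (S → Fin n → ℝ))).IsAddHaarMeasure :=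
    Measure.prod.instIsAddHaarMeasure _ _
  simp only [Matrix.isUnit_iff_isUnit_det, isUnit_iff_ne_zero]
  obtain ⟨P, Q, hPQ⟩ := exists_isUnit_systematicRKRP_submatrix c hr
  refine ae_ne_zero_of_analyticOnNhd (x₀ := (P, Q)) (fun pq _ => ?_)
    ((Matrix.isUnit_iff_isUnit_det _).mp hPQ).ne_zero
  exact analyticAt_matrix_det fun i j => analyticAt_systematicRKRP_apply (r i) (c j) pq

end SystematicRKRP

/-- Systematic RKRP codes are MDS with probability 1: for Lebesgue-almost
every `(P, Q)`, every `K × K` submatrix of `G = [I_K ; P ⊙ Q]` obtained by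
selecting any `K = mn` of its `N = K + S` rows is invertible. -/
theorem systematic_RKRP_is_MDS (m n S : ℕ)
    (hm : 1 ≤ m) (hn : 1 ≤ n) (hS : 1 ≤ S) :
    ∀ᵐ pq : (Fin S → Fin m → ℝ) × (Fin S → Fin n → ℝ) ∂volume,
      ∀ r : Fin (m * n) → (Fin m × Fin n) ⊕ Fin S, Function.Injective r →
        IsUnit
          ((systematicRKRP (Matrix.of pq.1) (Matrix.of pq.2)).submatrix r
            (⇑finProdFinEquiv.symm)) := by
  refine ae_all_iff.mpr fun r => Filter.eventually_imp_distrib_left.mpr fun hr => ?_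
  exact ae_isUnit_systematicRKRP_submatrix finProdFinEquiv.symm hr
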